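/- arXiv:1206.2526 — 2 statements merged into one kernel-verified Lean document; each statement's English description precedes it below -/
import Mathlib

section
/- Let x⁰ ∈ H and δ > 0, let Λ ⊆ I, and suppose x⁰ is δ-clustered sparse in Φ with respect to Λ and Φ*x⁰ ∈ ℓ¹(I). Let κ = κ(Λ, H_M) and assume κ < 1/2. If x⋆ ∈ H satisfies P_K x⋆ = P_K x⁰, Φ*x⋆ ∈ ℓ¹(I), and ‖Φ*x⋆‖₁ ≤ ‖Φ*x‖₁ for every x ∈ H with P_K x = P_K x⁰ and Φ*x ∈ ℓ¹(I) (i.e. x⋆ solves the analysis-side ℓ¹ minimization inpainting problem), then ‖x⋆ − x⁰‖ ≤ 2δ/(1 − 2κ). -/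
noncomputable section

open scoped InnerProductSpace

/-- The ℓ¹ norm of a coefficient sequence restricted (by coordinatewise multiplication with the
indicator of `Λ`) to an index set `Λ`. -/
def l1On {I : Type*} (Λ : Set I) (c : I → ℂ) : ℝ :=
  ∑' i, Set.indicator Λ (fun i => ‖c i‖) i

/-- The ℓ¹ norm of a coefficient sequence. -/
def l1 {I : Type*} (c : I → ℂ) : ℝ := ∑' i, ‖c i‖

/-- The analysis coefficients of `x` with respect to the family `Φ`. -/
def analysisCoeff {H : Type*} [NormedAddCommGroup H] [InnerProductSpace ℂ H]
    {I : Type*} (Φ : I → H) (x : H) : I → ℂ :=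
  fun i => ⟪x, Φ i⟫_ℂ

/-- The concentration `κ(Λ, H_M)` of the index set `Λ` on the subspace `M`:
the supremum of `‖1_Λ Φ* f‖₁ / ‖Φ* f‖₁` over nonzero `f ∈ M` with `Φ* f ∈ ℓ¹`. -/
def concentration {H : Type*} [NormedAddCommGroup H] [InnerProductSpace ℂ H]
    {I : Type*} (Φ : I → H) (Λ : Set I) (M : Submodule ℂ H) : ℝ :=
  sSup {r : ℝ | ∃ f : H, f ∈ M ∧ f ≠ 0 ∧ (Summable fun i => ‖⟪f, Φ i⟫_ℂ‖) ∧
    r = l1On Λ (analysisCoeff Φ f) / l1 (analysisCoeff Φ f)}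

/-!
Put `h = x⋆ - x⁰`, which lies in `M` because `x⋆` and `x⁰` have the same projection to `Mᗮ`.
Comparing coefficients by the triangle inequality, on `Λ` through `x⁰ = x⋆ - h` and off `Λ` through
`h = x⋆ - x⁰`, gives `‖Φ*h‖₁ + ‖Φ*x⁰‖₁ ≤ ‖Φ*x⋆‖₁ + 2‖1_Λ Φ*h‖₁ + 2‖1_{Λᶜ} Φ*x⁰‖₁`. Minimality
cancels `‖Φ*x⁰‖₁` against `‖Φ*x⋆‖₁`, and concentration bounds `‖1_Λ Φ*h‖₁` by `κ‖Φ*h‖₁`, so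
`(1 - 2κ)‖Φ*h‖₁ ≤ 2δ`. Finally `‖h‖ = ‖Φ*h‖₂ ≤ ‖Φ*h‖₁`.
-/

theorem tsum_sq_le_sq_tsum_of_nonneg {ι : Type*} {f : ι → ℝ} (hf : ∀ i, 0 ≤ f i)
    (hsum : Summable f) : ∑' i, f i ^ 2 ≤ (∑' i, f i) ^ 2 := by
  have hle (i : ι) : f i ^ 2 ≤ f i * ∑' j, f j := by
    rw [sq]
    exact mul_le_mul_of_nonneg_left (hsum.le_tsum i fun j _ => hf j) (hf i)
  have hbound : Summable fun i => f i * ∑' j, f j := hsum.mul_right _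
  calc
    ∑' i, f i ^ 2 ≤ ∑' i, f i * ∑' j, f j :=
      (hbound.of_nonneg_of_le (fun i => sq_nonneg (f i)) hle).tsum_le_tsum hle hbound
    _ = (∑' i, f i) ^ 2 := by rw [tsum_mul_right, sq]

section Coefficients

variable {ι E : Type*} [SeminormedAddCommGroup E] {a b : ι → E}

theorem summable_norm_sub (ha : Summable fun i => ‖a i‖) (hb : Summable fun i => ‖b i‖) :
    Summable fun i => ‖a i - b i‖ :=
  (ha.add hb).of_nonneg_of_le (fun _ => norm_nonneg _) fun i => norm_sub_le (a i) (b i)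

theorem norm_sub_add_norm_le_norm_add_indicator (a b : ι → E) (Λ : Set ι) (i : ι) :
    ‖a i - b i‖ + ‖b i‖ ≤
      ‖a i‖ + 2 * Λ.indicator (fun j => ‖a j - b j‖) i + 2 * Λᶜ.indicator (fun j => ‖b j‖) i := by
  by_cases hi : i ∈ Λ
  · rw [Set.indicator_of_mem hi, Set.indicator_of_notMem (Set.notMem_compl_iff.2 hi)]
    linarith [norm_le_norm_add_norm_sub (a i) (b i)]
  · rw [Set.indicator_of_notMem hi, Set.indicator_of_mem (Set.mem_compl hi)]
    linarith [norm_sub_le (a i) (b i)]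

theorem tsum_norm_sub_add_tsum_norm_le (ha : Summable fun i => ‖a i‖)
    (hb : Summable fun i => ‖b i‖) (Λ : Set ι) :
    ∑' i, ‖a i - b i‖ + ∑' i, ‖b i‖ ≤
      ∑' i, ‖a i‖ + 2 * ∑' i, Λ.indicator (fun j => ‖a j - b j‖) i
        + 2 * ∑' i, Λᶜ.indicator (fun j => ‖b j‖) i := by
  have hab := summable_norm_sub ha hb
  exact hasSum_le (norm_sub_add_norm_le_norm_add_indicator a b Λ) (hab.hasSum.add hb.hasSum)
    ((ha.hasSum.add ((hab.indicator Λ).hasSum.mul_left 2)).add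
      ((hb.indicator Λᶜ).hasSum.mul_left 2))

end Coefficients

theorem l1_nonneg {I : Type*} (c : I → ℂ) : 0 ≤ l1 c :=
  tsum_nonneg fun _ => norm_nonneg _

theorem l1On_le_l1 {I : Type*} (Λ : Set I) {c : I → ℂ} (hc : Summable fun i => ‖c i‖) :
    l1On Λ c ≤ l1 c :=
  (hc.indicator Λ).tsum_le_tsum (Set.indicator_le_self' fun _ _ => norm_nonneg _) hc

theorem sub_mem_of_orthogonalProjectionOnto_orthogonal_eq {𝕜 E : Type*} [RCLike 𝕜]
    [NormedAddCommGroup E] [InnerProductSpace 𝕜 E] {K : Submodule 𝕜 E} [K.HasOrthogonalProjection]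
    {x y : E} (h : Kᗮ.orthogonalProjectionOnto x = Kᗮ.orthogonalProjectionOnto y) :
    x - y ∈ K := by
  rw [← K.orthogonal_orthogonal, ← Submodule.orthogonalProjectionOnto_eq_zero_iff, map_sub, h,
    sub_self]

section Analysis

variable {H : Type*} [NormedAddCommGroup H] [InnerProductSpace ℂ H] {I : Type*} {Φ : I → H}

theorem analysisCoeff_sub (Φ : I → H) (x y : H) :
    analysisCoeff Φ (x - y) = fun i => analysisCoeff Φ x i - analysisCoeff Φ y i :=
  funext fun i => inner_sub_left x y (Φ i)

theorem summable_norm_analysisCoeff_sub {x y : H} (hx : Summable fun i => ‖analysisCoeff Φ x i‖)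
    (hy : Summable fun i => ‖analysisCoeff Φ y i‖) :
    Summable fun i => ‖analysisCoeff Φ (x - y) i‖ := by
  rw [analysisCoeff_sub]
  exact summable_norm_sub hx hy

theorem l1On_le_concentration_mul_l1 (Λ : Set I) {M : Submodule ℂ H} {f : H} (hfM : f ∈ M)
    (hf : Summable fun i => ‖analysisCoeff Φ f i‖) :
    l1On Λ (analysisCoeff Φ f) ≤ concentration Φ Λ M * l1 (analysisCoeff Φ f) := by
  rcases (l1_nonneg (analysisCoeff Φ f)).eq_or_lt with hzero | hpos
  · simpa only [← hzero, mul_zero] using l1On_le_l1 Λ hf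
  · have hf0 : f ≠ 0 := by
      rintro rfl
      simp [l1, analysisCoeff] at hpos
    rw [← div_le_iff₀ hpos]
    refine le_csSup ⟨1, ?_⟩ ⟨f, hfM, hf0, hf, rfl⟩
    rintro _ ⟨g, -, -, hg, rfl⟩
    exact div_le_one_of_le₀ (l1On_le_l1 Λ hg) (l1_nonneg _)

theorem l1_analysisCoeff_sub_le {M : Submodule ℂ H} {Λ : Set I} {x y : H} {δ : ℝ}
    (hx : Summable fun i => ‖analysisCoeff Φ x i‖) (hy : Summable fun i => ‖analysisCoeff Φ y i‖)
    (hmem : x - y ∈ M) (hle : l1 (analysisCoeff Φ x) ≤ l1 (analysisCoeff Φ y))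
    (hsparse : l1On Λᶜ (analysisCoeff Φ y) ≤ δ) (hκ : concentration Φ Λ M < 1 / 2) :
    l1 (analysisCoeff Φ (x - y)) ≤ 2 * δ / (1 - 2 * concentration Φ Λ M) := by
  have htriangle : l1 (analysisCoeff Φ (x - y)) + l1 (analysisCoeff Φ y) ≤
      l1 (analysisCoeff Φ x) + 2 * l1On Λ (analysisCoeff Φ (x - y))
        + 2 * l1On Λᶜ (analysisCoeff Φ y) := by
    rw [analysisCoeff_sub]
    exact tsum_norm_sub_add_tsum_norm_le hx hy Λ
  have hconc : l1On Λ (analysisCoeff Φ (x - y)) ≤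
      concentration Φ Λ M * l1 (analysisCoeff Φ (x - y)) :=
    l1On_le_concentration_mul_l1 Λ hmem (summable_norm_analysisCoeff_sub hx hy)
  rw [le_div_iff₀ (by linarith)]
  linarith

theorem mul_norm_le_l1_analysisCoeff {c : ℝ} {x : H} (hx : Summable fun i => ‖analysisCoeff Φ x i‖)
    (hc : (c * ‖x‖) ^ 2 ≤ ∑' i, ‖analysisCoeff Φ x i‖ ^ 2) :
    c * ‖x‖ ≤ l1 (analysisCoeff Φ x) :=
  le_of_sq_le_sq (hc.trans (tsum_sq_le_sq_tsum_of_nonneg (fun _ => norm_nonneg _) hx))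
    (l1_nonneg _)

theorem l1_inpainting_error_noiseless_general (Φ : I → H) (M : Submodule ℂ H) (c : ℝ)
    (hlowerFrame : ∀ f ∈ M, (Summable fun i => ‖⟪f, Φ i⟫_ℂ‖) →
      (c * ‖f‖) ^ 2 ≤ ∑' i, ‖⟪f, Φ i⟫_ℂ‖ ^ 2)
    (x0 : H) (δ : ℝ) (Λ : Set I) (hx0sum : Summable fun i => ‖⟪x0, Φ i⟫_ℂ‖)
    (hsparse : l1On Λᶜ (analysisCoeff Φ x0) ≤ δ) (hκ : concentration Φ Λ M < 1 / 2)
    (xstar : H) (hfeas : xstar - x0 ∈ M) (hstarsum : Summable fun i => ‖⟪xstar, Φ i⟫_ℂ‖)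
    (hle : l1 (analysisCoeff Φ xstar) ≤ l1 (analysisCoeff Φ x0)) :
    c * ‖xstar - x0‖ ≤ 2 * δ / (1 - 2 * concentration Φ Λ M) := by
  have hsum : Summable fun i => ‖analysisCoeff Φ (xstar - x0) i‖ :=
    summable_norm_analysisCoeff_sub hstarsum hx0sum
  exact (mul_norm_le_l1_analysisCoeff hsum (hlowerFrame _ hfeas hsum)).trans
    (l1_analysisCoeff_sub_le hstarsum hx0sum hfeas hle hsparse hκ)

end Analysis

/-- Error bound for analysis-side ℓ¹ minimization inpainting (noiseless case):
if `x⁰` is `δ`-clustered sparse with respect to `Λ` and the concentration `κ` of `Λ` on the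
missing subspace `H_M` satisfies `κ < 1/2`, then any minimizer `x⋆` of the analysis ℓ¹ norm
subject to the data constraint `P_K x⋆ = P_K x⁰` satisfies `‖x⋆ − x⁰‖ ≤ 2δ/(1 − 2κ)`. -/
theorem l1_inpainting_error_noiseless
    {H : Type*} [NormedAddCommGroup H] [InnerProductSpace ℂ H] [CompleteSpace H]
    {I : Type*} [Countable I] (Φ : I → H)
    (hPars : ∀ x : H, HasSum (fun i => ‖⟪x, Φ i⟫_ℂ‖ ^ 2) (‖x‖ ^ 2))
    (M : Submodule ℂ H) [CompleteSpace M]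
    (x0 : H) (δ : ℝ) (hδ : 0 < δ) (Λ : Set I)
    (hx0sum : Summable fun i => ‖⟪x0, Φ i⟫_ℂ‖)
    (hsparse : l1On Λᶜ (analysisCoeff Φ x0) ≤ δ)
    (κ : ℝ) (hκdef : κ = concentration Φ Λ M) (hκ : κ < 1 / 2)
    (xstar : H)
    (hfeas : (Submodule.orthogonalProjectionOnto Mᗮ xstar : H) = (Submodule.orthogonalProjectionOnto Mᗮ x0 : H))
    (hstarsum : Summable fun i => ‖⟪xstar, Φ i⟫_ℂ‖)
    (hmin : ∀ x : H, (Submodule.orthogonalProjectionOnto Mᗮ x : H) = (Submodule.orthogonalProjectionOnto Mᗮ x0 : H) →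
      (Summable fun i => ‖⟪x, Φ i⟫_ℂ‖) →
      l1 (analysisCoeff Φ xstar) ≤ l1 (analysisCoeff Φ x)) :
    ‖xstar - x0‖ ≤ 2 * δ / (1 - 2 * κ) := by
  subst hκdef
  simpa only [one_mul] using l1_inpainting_error_noiseless_general Φ M 1
    (fun f _ _ => by simpa only [one_mul] using (hPars f).tsum_eq.ge) x0 δ Λ hx0sum hsparse hκ xstar
    (sub_mem_of_orthogonalProjectionOnto_orthogonal_eq (Subtype.ext hfeas)) hstarsum
    (hmin x0 rfl hx0sum)
end
end

section
/- (Ray integral bound.) Let N ≥ 2 be a real number, let x₀ ∈ ℝ, and let y₀ ≥ 0. Define R_N(x₀, y₀) = ∫_{y₀}^{∞} (1 + x₀² + α²)^{−N/2} dα. Then R_N(x₀, y₀) ≤ π · (1 + x₀²)^{−1/2} · (1 + x₀² + y₀²)^{(2−N)/2}. -/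
noncomputable section

open MeasureTheory Real

/-!
On the ray `α > y` the integrand `(a + α²)^{-p}` is the product of `(a + α²)^{1-p}` and
`(a + α²)⁻¹`. Since `p ≥ 1` and `y ≥ 0`, the first factor is largest at `α = y`, while the second
has the primitive `arctan (α / √a) / √a`, whose increment over the ray is at most `π / (2√a)`.
-/

section InvAddSq

variable {a : ℝ}

lemma inv_add_sq_eq (ha : 0 < a) (x : ℝ) :
    (a + x ^ 2)⁻¹ = a⁻¹ * (1 + ((√a)⁻¹ * x) ^ 2)⁻¹ := by
  rw [mul_pow, inv_pow, sq_sqrt ha.le, ← mul_inv]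
  field_simp

lemma integrable_inv_add_sq (ha : 0 < a) : Integrable fun x : ℝ ↦ (a + x ^ 2)⁻¹ := by
  simp_rw [inv_add_sq_eq ha]
  exact (integrable_inv_one_add_sq.comp_mul_left' (by positivity)).const_mul _

lemma integral_Ioi_inv_add_sq (ha : 0 < a) (y : ℝ) :
    ∫ x in Set.Ioi y, (a + x ^ 2)⁻¹ = (√a)⁻¹ * (π / 2 - arctan ((√a)⁻¹ * y)) := by
  have h_scale : a⁻¹ * √a = (√a)⁻¹ := by
    rw [inv_mul_eq_div, sqrt_div_self]
  simp_rw [inv_add_sq_eq ha]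
  rw [integral_const_mul,
    integral_comp_mul_left_Ioi (fun x ↦ (1 + x ^ 2)⁻¹) y (inv_pos.2 (sqrt_pos.2 ha)),
    integral_Ioi_inv_one_add_sq, inv_inv, smul_eq_mul, ← mul_assoc, h_scale]

end InvAddSq

lemma rpow_neg_le_rpow_one_sub_mul_inv {s t p : ℝ} (hs : 0 < s) (hst : s ≤ t) (hp : 1 ≤ p) :
    t ^ (-p) ≤ s ^ (1 - p) * t⁻¹ := by
  have ht : 0 < t := hs.trans_le hst
  calc t ^ (-p) = t ^ (1 - p) * t⁻¹ := by
        rw [← rpow_neg_one, ← rpow_add ht]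
        ring_nf
    _ ≤ s ^ (1 - p) * t⁻¹ := by
        gcongr ?_ * _
        exact rpow_le_rpow_of_nonpos hs hst (by linarith)

lemma integral_Ioi_add_sq_rpow_neg_le {a p y : ℝ} (ha : 0 < a) (hp : 1 ≤ p) (hy : 0 ≤ y) :
    ∫ x in Set.Ioi y, (a + x ^ 2) ^ (-p) ≤
      (a + y ^ 2) ^ (1 - p) * ((√a)⁻¹ * (π / 2 - arctan ((√a)⁻¹ * y))) := by
  rw [← integral_Ioi_inv_add_sq ha, ← integral_const_mul]
  refine integral_mono_of_nonneg (.of_forall fun x ↦ by positivity)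
    ((integrable_inv_add_sq ha).const_mul _).integrableOn ?_
  filter_upwards [ae_restrict_mem measurableSet_Ioi] with x (hx : y < x)
  exact rpow_neg_le_rpow_one_sub_mul_inv (by positivity) (by gcongr) hp

theorem ray_integral_bound_general {N a y : ℝ} (ha : 0 < a) (hN : 2 ≤ N) (hy : 0 ≤ y) :
    ∫ α in Set.Ioi y, (a + α ^ 2) ^ (-(N / 2)) ≤
      π / 2 * a ^ (-(1 / 2) : ℝ) * (a + y ^ 2) ^ ((2 - N) / 2) := by
  have h_inv_sqrt : a ^ (-(1 / 2) : ℝ) = (√a)⁻¹ := by rw [rpow_neg ha.le, sqrt_eq_rpow]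
  have h_exponent : (2 - N) / 2 = 1 - N / 2 := by ring
  have h_arctan : 0 ≤ arctan ((√a)⁻¹ * y) := arctan_nonneg.2 (by positivity)
  rw [h_inv_sqrt, h_exponent]
  calc ∫ α in Set.Ioi y, (a + α ^ 2) ^ (-(N / 2))
      ≤ (a + y ^ 2) ^ (1 - N / 2) * ((√a)⁻¹ * (π / 2 - arctan ((√a)⁻¹ * y))) :=
        integral_Ioi_add_sq_rpow_neg_le ha (by linarith) hy
    _ ≤ (a + y ^ 2) ^ (1 - N / 2) * ((√a)⁻¹ * (π / 2)) := by
        gcongr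
        exact sub_le_self _ h_arctan
    _ = π / 2 * (√a)⁻¹ * (a + y ^ 2) ^ (1 - N / 2) := by ring

/-- Ray integral bound: for `N ≥ 2`, `x₀ ∈ ℝ` and `y₀ ≥ 0`,
`R_N(x₀, y₀) = ∫_{y₀}^∞ ⟨|(x₀, α)|⟩^{−N} dα ≤ π ⟨|x₀|⟩^{−1} ⟨|(x₀, y₀)|⟩^{2−N}`. -/
theorem ray_integral_bound (N x₀ y₀ : ℝ) (hN : 2 ≤ N) (hy₀ : 0 ≤ y₀) :
    ∫ α in Set.Ioi y₀, (1 + x₀ ^ 2 + α ^ 2) ^ (-(N / 2)) ≤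
      π * (1 + x₀ ^ 2) ^ (-(1 / 2) : ℝ) * (1 + x₀ ^ 2 + y₀ ^ 2) ^ ((2 - N) / 2) :=
  (ray_integral_bound_general (by positivity) hN hy₀).trans <| by
    gcongr
    exact half_le_self pi_pos.le
end
end
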